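/- arXiv:2507.13639 — 8 statements merged into one kernel-verified Lean document; each statement's English description precedes it below -/
import Mathlib

section
/- Let A be a symmetric positive semidefinite n × n real matrix, τ > 0 a real number, α ∈ (0,1), and S an n × m real matrix with Sᵀ·S invertible; set P := S·(Sᵀ·S)⁻¹·Sᵀ. If (1−α)·(A + τ·1) ≼ S·Sᵀ + τ·1 ≼ (1+α)·(A + τ·1) in the Loewner order, then ((1−α)/(1+α))·(A + τ·1) ≼ P·A·P + τ·1 ≼ ((1+α)/(1−α))·(A + τ·1). -/
/-!
Write `B = SSᵀ` and `Q = 1 - P`. Since `PS = S`, the matrix `B + τ1` is block diagonal for the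
splitting `1 = P + Q`, with lower block `τQ`, exactly as is `PAP + τ1`. Compressing the hypotheses
by `P` gives `(1-α) P(A+τ1)P ≼ B + τP ≼ (1+α) P(A+τ1)P`, which compares the upper blocks, and the
lower blocks coincide; hence `(1+α)⁻¹ (B + τ1) ≼ PAP + τ1 ≼ (1-α)⁻¹ (B + τ1)`. The hypotheses
themselves then compare `B + τ1` with `A + τ1`.
-/

open Matrix

/-- Lemma 2 of the paper: spectral approximation is preserved under projection.
If `(1−α)(A+τ1) ≼ SSᵀ+τ1 ≼ (1+α)(A+τ1)` then
`((1−α)/(1+α))(A+τ1) ≼ PAP+τ1 ≼ ((1+α)/(1−α))(A+τ1)`, where `P = S(SᵀS)⁻¹Sᵀ`. -/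
theorem projected_spectral_approximation
    {n m : Type*} [Fintype n] [Fintype m] [DecidableEq n] [DecidableEq m]
    (A : Matrix n n ℝ) (hA : A.PosSemidef) (τ α : ℝ) (hτ : 0 < τ)
    (hα : α ∈ Set.Ioo (0 : ℝ) 1)
    (S : Matrix n m ℝ) (hS : IsUnit (Sᵀ * S))
    (P : Matrix n n ℝ) (hP : P = S * (Sᵀ * S)⁻¹ * Sᵀ)
    (hlow : (S * Sᵀ + τ • (1 : Matrix n n ℝ)
        - (1 - α) • (A + τ • (1 : Matrix n n ℝ))).PosSemidef)
    (hup : ((1 + α) • (A + τ • (1 : Matrix n n ℝ))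
        - (S * Sᵀ + τ • (1 : Matrix n n ℝ))).PosSemidef) :
    (P * A * P + τ • (1 : Matrix n n ℝ)
        - ((1 - α) / (1 + α)) • (A + τ • (1 : Matrix n n ℝ))).PosSemidef ∧
    (((1 + α) / (1 - α)) • (A + τ • (1 : Matrix n n ℝ))
        - (P * A * P + τ • (1 : Matrix n n ℝ))).PosSemidef := by
  obtain ⟨h0, h1⟩ := hα
  have ha : 0 < 1 - α := by linarith
  have hb : 0 < 1 + α := by linarith
  have hdet : IsUnit (Sᵀ * S).det := (Matrix.isUnit_iff_isUnit_det _).mp hS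
  have hPS : P * S = S := by
    rw [hP, Matrix.mul_assoc, Matrix.mul_assoc, Matrix.nonsing_inv_mul _ hdet, Matrix.mul_one]
  have hPt : Pᵀ = P := by
    rw [hP]
    simp [Matrix.transpose_mul, Matrix.transpose_nonsing_inv, Matrix.mul_assoc]
  have hPP : P * P = P := by
    nth_rw 2 [hP]
    rw [← Matrix.mul_assoc, ← Matrix.mul_assoc, hPS, ← hP]
  have hSP : Sᵀ * P = Sᵀ := by
    simpa [Matrix.transpose_mul, hPt] using congrArg Matrix.transpose hPS
  have hPB : P * (S * Sᵀ) * P = S * Sᵀ := by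
    rw [← Matrix.mul_assoc, hPS, Matrix.mul_assoc, hSP]
  have hQ : (1 - P).PosSemidef := by
    have h := Matrix.posSemidef_conjTranspose_mul_self (1 - P)
    have e : (1 - P)ᴴ * (1 - P) = 1 - P := by
      simp [Matrix.conjTranspose_eq_transpose_of_trivial, hPt, Matrix.mul_sub, hPP,
        Matrix.sub_mul]
    rwa [e] at h
  have hPlow : (S * Sᵀ + τ • P - (1 - α) • (P * A * P + τ • P)).PosSemidef := by
    have h := hlow.conjTranspose_mul_mul_same P
    rw [Matrix.conjTranspose_eq_transpose_of_trivial, hPt] at h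
    simpa only [Matrix.mul_sub, Matrix.sub_mul, Matrix.mul_add, Matrix.add_mul, Matrix.mul_smul,
      Matrix.smul_mul, Matrix.mul_one, hPP, hPB] using h
  have hPup : ((1 + α) • (P * A * P + τ • P) - (S * Sᵀ + τ • P)).PosSemidef := by
    have h := hup.conjTranspose_mul_mul_same P
    rw [Matrix.conjTranspose_eq_transpose_of_trivial, hPt] at h
    simpa only [Matrix.mul_sub, Matrix.sub_mul, Matrix.mul_add, Matrix.add_mul, Matrix.mul_smul,
      Matrix.smul_mul, Matrix.mul_one, hPP, hPB] using h
  -- In both parts the `Q`-term is the slack of the lower blocks: `τ - τ / (1 + α) = τ * α / (1 + α)`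
  -- and `τ / (1 - α) - τ = τ * α / (1 - α)`.
  constructor
  · have h := ((hlow.add hPup).add (hQ.smul (by positivity : 0 ≤ τ * α))).smul
      (inv_nonneg.mpr hb.le)
    convert h using 1
    ext i j
    simp only [Matrix.add_apply, Matrix.sub_apply, Matrix.smul_apply, smul_eq_mul]
    field_simp
    ring
  · have h := ((hup.add hPlow).add (hQ.smul (by positivity : 0 ≤ τ * α))).smul
      (inv_nonneg.mpr ha.le)
    convert h using 1
    ext i j
    simp only [Matrix.add_apply, Matrix.sub_apply, Matrix.smul_apply, smul_eq_mul]
    field_simp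
    ring
end

section
/- Let A be a symmetric positive semidefinite n × n real matrix, τ > 0 a real number, α ∈ (0,1), and S an n × m real matrix with Sᵀ·S invertible; set P := S·(Sᵀ·S)⁻¹·Sᵀ. If (1−α)·(A + τ·1) ≼ S·Sᵀ + τ·1 in the Loewner order, then 1 − P ≼ (τ/(1−α))·(A + τ·1)⁻¹. -/
/-!
Write `C = A + τ1`, `c = 1 - α`, `R = 1 - P` and `M = SSᵀ + τ1 - cC`. Since `R` is the orthogonal
projection onto the complement of the column space of `S`, `RS = 0`, so `RMR = τR - c RCR`.
With `K = (τ/c)C⁻¹ - R`, completing the square gives `τK = c KCK + RMR`, and both summands on the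
right are positive semidefinite because `K` and `R` are symmetric.
-/

open Matrix

/-- Lemma 3 of the paper: if `(1−α)(A+τ1) ≼ SSᵀ+τ1` then
`1 − P ≼ (τ/(1−α))·(A+τ1)⁻¹`, where `P = S(SᵀS)⁻¹Sᵀ`. -/
theorem projection_residual_bound
    {n m : Type*} [Fintype n] [Fintype m] [DecidableEq n] [DecidableEq m]
    (A : Matrix n n ℝ) (hA : A.PosSemidef) (τ α : ℝ) (hτ : 0 < τ)
    (hα : α ∈ Set.Ioo (0 : ℝ) 1)
    (S : Matrix n m ℝ) (hS : IsUnit (Sᵀ * S))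
    (P : Matrix n n ℝ) (hP : P = S * (Sᵀ * S)⁻¹ * Sᵀ)
    (hlow : (S * Sᵀ + τ • (1 : Matrix n n ℝ)
        - (1 - α) • (A + τ • (1 : Matrix n n ℝ))).PosSemidef) :
    ((τ / (1 - α)) • (A + τ • (1 : Matrix n n ℝ))⁻¹
        - ((1 : Matrix n n ℝ) - P)).PosSemidef := by
  obtain ⟨-, hα1⟩ := hα
  have hc : 0 < 1 - α := sub_pos.2 hα1
  have hC : (A + τ • (1 : Matrix n n ℝ)).PosDef :=
    Matrix.PosDef.posSemidef_add hA (Matrix.PosDef.one.smul hτ)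
  set C := A + τ • (1 : Matrix n n ℝ) with hCdef
  set c := 1 - α with hcdef
  set R := (1 : Matrix n n ℝ) - P with hR
  have hSdet : IsUnit (Sᵀ * S).det := (Matrix.isUnit_iff_isUnit_det _).1 hS
  have hCdet : IsUnit C.det := (Matrix.isUnit_iff_isUnit_det _).1 hC.isUnit
  have hPS : P * S = S := by
    rw [hP, Matrix.mul_assoc, Matrix.mul_assoc, Matrix.nonsing_inv_mul _ hSdet, Matrix.mul_one]
  have hPT : Pᵀ = P := by
    rw [hP]
    simp [Matrix.transpose_mul, Matrix.transpose_nonsing_inv, Matrix.mul_assoc]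
  have hRS : R * S = 0 := by rw [hR, Matrix.sub_mul, hPS, Matrix.one_mul, sub_self]
  have hRP : R * P = 0 := by
    rw [hP, ← Matrix.mul_assoc, ← Matrix.mul_assoc, hRS, Matrix.zero_mul, Matrix.zero_mul]
  have hRR : R * R = R := by
    nth_rewrite 2 [hR]
    rw [Matrix.mul_sub, hRP, Matrix.mul_one, sub_zero]
  have hRT : Rᴴ = R := by
    rw [Matrix.conjTranspose_eq_transpose_of_trivial, hR, Matrix.transpose_sub, hPT,
      Matrix.transpose_one]
  have hKT : ((τ / c) • C⁻¹ - R)ᴴ = (τ / c) • C⁻¹ - R := by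
    rw [Matrix.conjTranspose_sub, hRT, Matrix.conjTranspose_smul, hC.inv.isHermitian.eq,
      star_trivial]
  have h1 : (((τ / c) • C⁻¹ - R) * C * ((τ / c) • C⁻¹ - R)).PosSemidef := by
    have := hC.posSemidef.conjTranspose_mul_mul_same ((τ / c) • C⁻¹ - R)
    rwa [hKT] at this
  have h2 : (R * (S * Sᵀ + τ • (1 : Matrix n n ℝ) - c • C) * R).PosSemidef := by
    have := hlow.conjTranspose_mul_mul_same R
    rwa [hRT] at this
  have e1 : ((τ / c) • C⁻¹ - R) * C * ((τ / c) • C⁻¹ - R)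
      = (τ / c * (τ / c)) • C⁻¹ - (2 * (τ / c)) • R + R * C * R := by
    have a1 : C⁻¹ * C = 1 := Matrix.nonsing_inv_mul _ hCdet
    have a2 : R * C * C⁻¹ = R := Matrix.mul_nonsing_inv_cancel_right _ _ hCdet
    simp only [Matrix.sub_mul, Matrix.mul_sub, Matrix.smul_mul, Matrix.mul_smul, a1, a2,
      Matrix.one_mul]
    module
  have e2 : R * (S * Sᵀ + τ • (1 : Matrix n n ℝ) - c • C) * R = τ • R - c • (R * C * R) := by
    simp only [Matrix.sub_mul, Matrix.mul_sub, Matrix.mul_add, Matrix.add_mul, Matrix.smul_mul,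
      Matrix.mul_smul, ← Matrix.mul_assoc, hRS, Matrix.zero_mul, Matrix.mul_one, hRR, zero_add]
  have key : (τ / c) • C⁻¹ - R
      = τ⁻¹ • (c • (((τ / c) • C⁻¹ - R) * C * ((τ / c) • C⁻¹ - R))
        + R * (S * Sᵀ + τ • (1 : Matrix n n ℝ) - c • C) * R) := by
    rw [e1, e2]
    match_scalars <;> field_simp <;> ring
  rw [key]
  exact ((h1.smul hc.le).add h2).smul (inv_nonneg.2 hτ.le)
end

section
/- Let P be a symmetric n × n real matrix with P·P = P and 1 − P positive semidefinite, let M be a symmetric positive semidefinite n × n real matrix, and let τ > 0. Then the matrix (P·M·P + τ·1)⁻¹·(1 − P) is positive semidefinite, and consequently for every vector φ ∈ ℝⁿ, φᵀ·(P·M·P + τ·1)⁻¹·P·φ ≤ φᵀ·(P·M·P + τ·1)⁻¹·φ. -/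
/-!
Write `A = PMP + τ1`. Since `P (1 - P) = 0`, one has `A (1 - P) = τ (1 - P)`. As `A` is positive
definite, hence invertible, `A⁻¹ (1 - P) = τ⁻¹ (1 - P)`, a nonnegative multiple of a positive
semidefinite matrix. The inequality of quadratic forms is the nonnegativity of
`A⁻¹ - A⁻¹ P = A⁻¹ (1 - P)`.
-/

open Matrix

/-- `(PMP + τ1)⁻¹(1 − P)` is positive semidefinite, and hence the projected
resolvent quadratic form is dominated by the unprojected one. -/
theorem resolvent_residual_posSemidef
    {n : Type*} [Fintype n] [DecidableEq n]
    (P M : Matrix n n ℝ) (hPsymm : P.IsSymm) (hPidem : P * P = P)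
    (hPres : ((1 : Matrix n n ℝ) - P).PosSemidef)
    (hM : M.PosSemidef) (τ : ℝ) (hτ : 0 < τ) :
    ((P * M * P + τ • (1 : Matrix n n ℝ))⁻¹ * ((1 : Matrix n n ℝ) - P)).PosSemidef ∧
    ∀ φ : n → ℝ,
      φ ⬝ᵥ (((P * M * P + τ • (1 : Matrix n n ℝ))⁻¹ * P) *ᵥ φ)
        ≤ φ ⬝ᵥ ((P * M * P + τ • (1 : Matrix n n ℝ))⁻¹ *ᵥ φ) := by
  have hPMP : (P * M * P).PosSemidef := by
    have h := hM.conjTranspose_mul_mul_same P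
    rwa [conjTranspose_eq_transpose_of_trivial, hPsymm.eq] at h
  have hA : (P * M * P + τ • (1 : Matrix n n ℝ)).PosDef :=
    PosDef.posSemidef_add hPMP (PosDef.one.smul hτ)
  have hdet := (isUnit_iff_isUnit_det _).mp hA.isUnit
  have hmul : (P * M * P + τ • (1 : Matrix n n ℝ)) * (1 - P) = τ • (1 - P) := by
    have hP : P * (1 - P) = 0 := by rw [mul_sub, mul_one, hPidem, sub_self]
    rw [add_mul, mul_assoc (P * M), hP, mul_zero, zero_add, smul_mul_assoc, one_mul]
  have hres : (P * M * P + τ • (1 : Matrix n n ℝ))⁻¹ * (1 - P) = τ⁻¹ • (1 - P) := by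
    have h : (1 : Matrix n n ℝ) - P =
        (P * M * P + τ • (1 : Matrix n n ℝ)) * (τ⁻¹ • (1 - P)) := by
      rw [mul_smul_comm, hmul, smul_smul, inv_mul_cancel₀ hτ.ne', one_smul]
    conv_lhs => rw [h]
    exact nonsing_inv_mul_cancel_left _ _ hdet
  have hpsd : ((P * M * P + τ • (1 : Matrix n n ℝ))⁻¹ * (1 - P)).PosSemidef := by
    rw [hres]
    exact hPres.smul (inv_nonneg.mpr hτ.le)
  refine ⟨hpsd, fun φ => ?_⟩
  have h := hpsd.dotProduct_mulVec_nonneg φ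
  rw [star_trivial, mul_sub, mul_one, sub_mulVec, dotProduct_sub] at h
  exact sub_nonneg.mp h
end

section
/- Let Φ_S be an n × s real matrix with Φ_Sᵀ·Φ_S invertible, Φ_R an n × r real matrix, Φ_W an n × T real matrix, τ > 0 a real number, y ∈ ℝ^T, and φ ∈ ℝⁿ. Set P := Φ_S·(Φ_Sᵀ·Φ_S)⁻¹·Φ_Sᵀ, k_S := Φ_Sᵀ·φ, K_{S,S} := Φ_Sᵀ·Φ_S, K_{S,R} := Φ_Sᵀ·Φ_R, K_{R,S} := Φ_Rᵀ·Φ_S, and K_{S,W} := Φ_Sᵀ·Φ_W. Then φᵀ·(P·Φ_R·Φ_Rᵀ·P + τ·1)⁻¹·P·Φ_W·y = k_Sᵀ·(K_{S,R}·K_{R,S} + τ·K_{S,S})⁻¹·K_{S,W}·y. -/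
open Matrix

/-!
Write `G = ΦSᵀ ΦS`, `A = P ΦR ΦRᵀ P + τ 1` and `M = (ΦSᵀ ΦR)(ΦSᵀ ΦR)ᵀ + τ G`. Since `P ΦS = ΦS`, the
push-through identity `A ΦS = ΦS G⁻¹ M` holds, so `A (ΦS M⁻¹ ΦSᵀ) = ΦS G⁻¹ ΦSᵀ = P` and therefore
`A⁻¹ P = ΦS M⁻¹ ΦSᵀ`. Both `A` and `M` are invertible because each is positive definite: a positive
semidefinite matrix `B Bᵀ` plus `τ` times a positive definite one.
-/

/-- The matrices inverted on both sides of the kernel trick have this form, with `N = 1` in feature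
space and `N = ΦSᵀ ΦS` in kernel space. -/
lemma isUnit_mul_transpose_add_smul {m k : Type*} [Fintype m] [DecidableEq m] [Fintype k]
    (B : Matrix m k ℝ) {N : Matrix m m ℝ} (hN : N.PosDef) {τ : ℝ} (hτ : 0 < τ) :
    IsUnit (B * Bᵀ + τ • N) := by
  have hB : (B * Bᵀ).PosSemidef := by
    simpa [conjTranspose_eq_transpose_of_trivial] using posSemidef_self_mul_conjTranspose B
  exact (Matrix.PosDef.posSemidef_add hB (hN.smul hτ)).isUnit

/-- Kernel trick for the projected estimator (Lemma 7, first part):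
`φᵀ(PΦ_RΦ_RᵀP + τ1)⁻¹PΦ_W y = k_Sᵀ(K_{S,R}K_{R,S} + τK_{S,S})⁻¹K_{S,W} y`. -/
theorem kernel_trick_estimator
    {n s r T : Type*} [Fintype n] [DecidableEq n] [Fintype s] [DecidableEq s]
    [Fintype r] [Fintype T]
    (ΦS : Matrix n s ℝ) (hS : IsUnit (ΦSᵀ * ΦS))
    (ΦR : Matrix n r ℝ) (ΦW : Matrix n T ℝ) (τ : ℝ) (hτ : 0 < τ)
    (y : T → ℝ) (φ : n → ℝ)
    (P : Matrix n n ℝ) (hP : P = ΦS * (ΦSᵀ * ΦS)⁻¹ * ΦSᵀ)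
    (kS : s → ℝ) (hkS : kS = ΦSᵀ *ᵥ φ)
    (KSS : Matrix s s ℝ) (hKSS : KSS = ΦSᵀ * ΦS)
    (KSR : Matrix s r ℝ) (hKSR : KSR = ΦSᵀ * ΦR)
    (KRS : Matrix r s ℝ) (hKRS : KRS = ΦRᵀ * ΦS)
    (KSW : Matrix s T ℝ) (hKSW : KSW = ΦSᵀ * ΦW) :
    φ ⬝ᵥ (((P * ΦR * ΦRᵀ * P + τ • (1 : Matrix n n ℝ))⁻¹ * P * ΦW) *ᵥ y)
      = kS ⬝ᵥ (((KSR * KRS + τ • KSS)⁻¹ * KSW) *ᵥ y) := by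
  subst hP hkS hKSS hKSR hKRS hKSW
  set G := ΦSᵀ * ΦS with hG
  set P := ΦS * G⁻¹ * ΦSᵀ with hP
  set A := P * ΦR * ΦRᵀ * P + τ • (1 : Matrix n n ℝ) with hA
  set M := ΦSᵀ * ΦR * (ΦRᵀ * ΦS) + τ • G with hM
  have hGdet : IsUnit G.det := (isUnit_iff_isUnit_det G).1 hS
  have hGpos : G.PosDef := by
    have h : G.PosSemidef := by
      simpa [conjTranspose_eq_transpose_of_trivial] using posSemidef_conjTranspose_mul_self ΦS
    exact h.posDef_iff_isUnit.2 hS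
  have hPT : Pᵀ = P := by
    simp [hP, hG, transpose_nonsing_inv, Matrix.mul_assoc]
  have hPS : P * ΦS = ΦS := by
    rw [hP, Matrix.mul_assoc, ← hG, nonsing_inv_mul_cancel_right _ _ hGdet]
  have hAdet : IsUnit A.det := by
    have h := isUnit_mul_transpose_add_smul (P * ΦR) (PosDef.one (n := n) (R := ℝ)) hτ
    rw [transpose_mul, hPT, ← Matrix.mul_assoc] at h
    exact (isUnit_iff_isUnit_det A).1 h
  have hMdet : IsUnit M.det := by
    have h := isUnit_mul_transpose_add_smul (ΦSᵀ * ΦR) hGpos hτ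
    rw [transpose_mul, transpose_transpose] at h
    exact (isUnit_iff_isUnit_det M).1 h
  have hpush : A * ΦS = ΦS * G⁻¹ * M := by
    have h1 : A * ΦS = P * ΦR * ΦRᵀ * ΦS + τ • ΦS := by
      rw [hA, Matrix.add_mul, Matrix.mul_assoc _ P, hPS, Matrix.smul_mul, Matrix.one_mul]
    rw [h1, hM, Matrix.mul_add, Matrix.mul_smul, nonsing_inv_mul_cancel_right _ _ hGdet, hP]
    simp only [Matrix.mul_assoc]
  have hkey : A⁻¹ * P = ΦS * M⁻¹ * ΦSᵀ := by
    have h : A * (ΦS * M⁻¹ * ΦSᵀ) = P := by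
      rw [← Matrix.mul_assoc, ← Matrix.mul_assoc, hpush, mul_nonsing_inv_cancel_right _ _ hMdet]
    rw [← h, nonsing_inv_mul_cancel_left _ _ hAdet]
  rw [hkey, Matrix.mul_assoc, Matrix.mul_assoc, ← mulVec_mulVec, dotProduct_mulVec,
    ← mulVec_transpose]
end

section
/- Let Φ_S be an n × s real matrix with Φ_Sᵀ·Φ_S invertible, Φ_R an n × r real matrix, τ > 0 a real number, and φ ∈ ℝⁿ. Set P := Φ_S·(Φ_Sᵀ·Φ_S)⁻¹·Φ_Sᵀ, k_S := Φ_Sᵀ·φ, K_{S,S} := Φ_Sᵀ·Φ_S, K_{S,R} := Φ_Sᵀ·Φ_R, and K_{R,S} := Φ_Rᵀ·Φ_S. Then φᵀ·(P·Φ_R·Φ_Rᵀ·P + τ·1)⁻¹·φ = (1/τ)·( φᵀ·φ − k_Sᵀ·K_{S,S}⁻¹·K_{S,R}·(K_{R,S}·K_{S,S}⁻¹·K_{S,R} + τ·1)⁻¹·K_{R,S}·K_{S,S}⁻¹·k_S ). -/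
/-!
With `B = P * ΦR` and `P` the symmetric idempotent projecting onto the column span of `ΦS`, the matrix
on the left is `B * Bᵀ + τ • 1`. The push-through identity `(B * Bᵀ + τ • 1) * B = B * (Bᵀ * B + τ • 1)`
gives `(B * Bᵀ + τ • 1)⁻¹ = τ⁻¹ • (1 - B * (Bᵀ * B + τ • 1)⁻¹ * Bᵀ)`
(`inv_mul_transpose_add_smul`). Idempotence of `P` turns `Bᵀ * B` into the kernel matrix
`ΦRᵀ * ΦS * (ΦSᵀ * ΦS)⁻¹ * (ΦSᵀ * ΦR)`, and the outer factors `ΦS` and `ΦSᵀ` contained in `B` and `Bᵀ`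
are absorbed into `ΦSᵀ *ᵥ φ`.
-/

open Matrix

/-- A case of the Woodbury identity, trading the inverse of the Gram matrix of the rows of `B` for
that of its columns. Positivity of `τ` makes `Bᵀ * B + τ • 1` positive definite, hence invertible. -/
theorem inv_mul_transpose_add_smul {n r : Type*} [Fintype n] [DecidableEq n] [Fintype r]
    [DecidableEq r] (B : Matrix n r ℝ) {τ : ℝ} (hτ : 0 < τ) :
    (B * Bᵀ + τ • (1 : Matrix n n ℝ))⁻¹
      = τ⁻¹ • (1 - B * (Bᵀ * B + τ • (1 : Matrix r r ℝ))⁻¹ * Bᵀ) := by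
  have hM : IsUnit (Bᵀ * B + τ • (1 : Matrix r r ℝ)).det := by
    have h : (Bᵀ * B).PosSemidef := by simpa using posSemidef_conjTranspose_mul_self B
    exact (isUnit_iff_isUnit_det _).1 (PosDef.posSemidef_add h (PosDef.one.smul hτ)).isUnit
  have push : (B * Bᵀ + τ • (1 : Matrix n n ℝ)) * B
      = B * (Bᵀ * B + τ • (1 : Matrix r r ℝ)) := by
    simp [Matrix.add_mul, Matrix.mul_add, Matrix.mul_assoc]
  apply inv_eq_right_inv
  rw [mul_smul_comm, Matrix.mul_sub, Matrix.mul_one, ← Matrix.mul_assoc, ← Matrix.mul_assoc, push,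
    Matrix.mul_assoc B, mul_nonsing_inv _ hM, Matrix.mul_one, add_sub_cancel_left, smul_smul,
    inv_mul_cancel₀ hτ.ne', one_smul]

/-- Kernel trick for the projected posterior variance (Lemma 7, second part):
`φᵀ(PΦ_RΦ_RᵀP + τ1)⁻¹φ
  = (1/τ)(φᵀφ − k_SᵀK_{S,S}⁻¹K_{S,R}(K_{R,S}K_{S,S}⁻¹K_{S,R} + τ1)⁻¹K_{R,S}K_{S,S}⁻¹k_S)`. -/
theorem kernel_trick_variance
    {n s r : Type*} [Fintype n] [DecidableEq n] [Fintype s] [DecidableEq s]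
    [Fintype r] [DecidableEq r]
    (ΦS : Matrix n s ℝ) (hS : IsUnit (ΦSᵀ * ΦS))
    (ΦR : Matrix n r ℝ) (τ : ℝ) (hτ : 0 < τ) (φ : n → ℝ)
    (P : Matrix n n ℝ) (hP : P = ΦS * (ΦSᵀ * ΦS)⁻¹ * ΦSᵀ)
    (kS : s → ℝ) (hkS : kS = ΦSᵀ *ᵥ φ)
    (KSS : Matrix s s ℝ) (hKSS : KSS = ΦSᵀ * ΦS)
    (KSR : Matrix s r ℝ) (hKSR : KSR = ΦSᵀ * ΦR)
    (KRS : Matrix r s ℝ) (hKRS : KRS = ΦRᵀ * ΦS) :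
    φ ⬝ᵥ ((P * ΦR * ΦRᵀ * P + τ • (1 : Matrix n n ℝ))⁻¹ *ᵥ φ)
      = (1 / τ) * (φ ⬝ᵥ φ
        - kS ⬝ᵥ ((KSS⁻¹ * KSR * (KRS * KSS⁻¹ * KSR + τ • (1 : Matrix r r ℝ))⁻¹
            * KRS * KSS⁻¹) *ᵥ kS)) := by
  subst hkS hKSS hKSR hKRS
  have hG : IsUnit (ΦSᵀ * ΦS).det := (isUnit_iff_isUnit_det _).1 hS
  have hPT : Pᵀ = P := by
    simp [hP, transpose_nonsing_inv, Matrix.mul_assoc]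
  have hPP : P * P = P := by
    calc P * P = ΦS * ((ΦSᵀ * ΦS)⁻¹ * (ΦSᵀ * ΦS)) * (ΦSᵀ * ΦS)⁻¹ * ΦSᵀ := by
          simp only [hP, Matrix.mul_assoc]
      _ = P := by rw [nonsing_inv_mul _ hG, Matrix.mul_one, hP]
  have hBT : (P * ΦR)ᵀ = ΦRᵀ * P := by rw [transpose_mul, hPT]
  have hBB : (P * ΦR)ᵀ * (P * ΦR) = ΦRᵀ * ΦS * (ΦSᵀ * ΦS)⁻¹ * (ΦSᵀ * ΦR) := by
    rw [hBT, Matrix.mul_assoc, ← Matrix.mul_assoc P P, hPP, hP]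
    simp only [Matrix.mul_assoc]
  have hA : P * ΦR * ΦRᵀ * P = (P * ΦR) * (P * ΦR)ᵀ := by
    rw [hBT]
    simp only [Matrix.mul_assoc]
  have hk (X : Matrix s s ℝ) :
      (ΦSᵀ *ᵥ φ) ⬝ᵥ (X *ᵥ (ΦSᵀ *ᵥ φ)) = φ ⬝ᵥ ((ΦS * X * ΦSᵀ) *ᵥ φ) := by
    rw [mulVec_transpose, ← dotProduct_mulVec, ← mulVec_transpose, mulVec_mulVec, mulVec_mulVec,
      Matrix.mul_assoc]
  rw [hA, inv_mul_transpose_add_smul _ hτ, hBB, hk, hBT, smul_mulVec, dotProduct_smul, sub_mulVec,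
    one_mulVec, dotProduct_sub, smul_eq_mul, one_div, hP]
  simp only [Matrix.mul_assoc]
end

section
/- Let Φ_S be an n × s real matrix with Φ_Sᵀ·Φ_S invertible, Φ_R an n × r real matrix, τ > 0 a real number, and φ ∈ ℝⁿ. Set P := Φ_S·(Φ_Sᵀ·Φ_S)⁻¹·Φ_Sᵀ, k_S := Φ_Sᵀ·φ, K_{S,S} := Φ_Sᵀ·Φ_S, K_{S,R} := Φ_Sᵀ·Φ_R, and K_{R,S} := Φ_Rᵀ·Φ_S. Then k_Sᵀ·(K_{S,R}·K_{R,S} + τ·K_{S,S})⁻¹·k_S = φᵀ·(P·Φ_R·Φ_Rᵀ·P + τ·1)⁻¹·P·φ. -/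
/-!
Write `G = ΦSᵀΦS`, `M = ΦSᵀΦRΦRᵀΦS + τG` and `N = PΦRΦRᵀP + τ1`. Since `PΦS = ΦS` and
`P = ΦS G⁻¹ ΦSᵀ`, there is the intertwining relation `N ΦS = ΦS G⁻¹ M`. Both `M` and `N` are
positive definite, being sums of a Gram matrix and a positive definite matrix (`G` is an invertible
Gram matrix and `τ > 0`), hence invertible. Multiplying the relation by `M⁻¹ΦSᵀ` on the right gives
`N ΦS M⁻¹ ΦSᵀ = P`, so `N⁻¹P = ΦS M⁻¹ ΦSᵀ`, and the claim is this identity evaluated at `φ`.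
-/

open Matrix

/-- Sensitivity identity (Step 3 of the estimator lemma):
`k_Sᵀ(K_{S,R}K_{R,S} + τK_{S,S})⁻¹k_S = φᵀ(PΦ_RΦ_RᵀP + τ1)⁻¹Pφ`. -/
theorem sensitivity_quadratic_form_identity
    {n s r : Type*} [Fintype n] [DecidableEq n] [Fintype s] [DecidableEq s]
    [Fintype r]
    (ΦS : Matrix n s ℝ) (hS : IsUnit (ΦSᵀ * ΦS))
    (ΦR : Matrix n r ℝ) (τ : ℝ) (hτ : 0 < τ) (φ : n → ℝ)
    (P : Matrix n n ℝ) (hP : P = ΦS * (ΦSᵀ * ΦS)⁻¹ * ΦSᵀ)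
    (kS : s → ℝ) (hkS : kS = ΦSᵀ *ᵥ φ)
    (KSS : Matrix s s ℝ) (hKSS : KSS = ΦSᵀ * ΦS)
    (KSR : Matrix s r ℝ) (hKSR : KSR = ΦSᵀ * ΦR)
    (KRS : Matrix r s ℝ) (hKRS : KRS = ΦRᵀ * ΦS) :
    kS ⬝ᵥ ((KSR * KRS + τ • KSS)⁻¹ *ᵥ kS)
      = φ ⬝ᵥ (((P * ΦR * ΦRᵀ * P + τ • (1 : Matrix n n ℝ))⁻¹ * P) *ᵥ φ) := by
  subst hkS hKSS hKSR hKRS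
  set G := ΦSᵀ * ΦS with hG
  have hdet : IsUnit G.det := (Matrix.isUnit_iff_isUnit_det _).1 hS
  have hGpd : G.PosDef := by
    have h : G.PosSemidef := by
      simpa using Matrix.posSemidef_conjTranspose_mul_self ΦS
    exact h.posDef_iff_isUnit.2 hS
  have hPT : Pᵀ = P := by
    have hGT : Gᵀ = G := by simp [hG]
    rw [hP]
    simp [Matrix.transpose_mul, Matrix.transpose_nonsing_inv, hGT, Matrix.mul_assoc]
  have hPS : P * ΦS = ΦS := by
    rw [hP, Matrix.mul_assoc, ← hG, Matrix.mul_assoc, Matrix.nonsing_inv_mul _ hdet,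
      Matrix.mul_one]
  set M := ΦSᵀ * ΦR * (ΦRᵀ * ΦS) + τ • G with hM
  set N := P * ΦR * ΦRᵀ * P + τ • (1 : Matrix n n ℝ) with hN
  have hMu : IsUnit M.det := by
    have h : (ΦSᵀ * ΦR * (ΦRᵀ * ΦS)).PosSemidef := by
      simpa using Matrix.posSemidef_self_mul_conjTranspose (ΦSᵀ * ΦR)
    exact (Matrix.isUnit_iff_isUnit_det _).1 (Matrix.PosDef.posSemidef_add h (hGpd.smul hτ)).isUnit
  have hNu : IsUnit N.det := by
    have h : (P * ΦR * ΦRᵀ * P).PosSemidef := by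
      simpa [hPT, Matrix.mul_assoc] using Matrix.posSemidef_self_mul_conjTranspose (P * ΦR)
    exact (Matrix.isUnit_iff_isUnit_det _).1
      (Matrix.PosDef.posSemidef_add h (Matrix.PosDef.one.smul hτ)).isUnit
  have hNS : N * ΦS = ΦS * G⁻¹ * M := by
    have h : ΦS * G⁻¹ * G = ΦS := by
      rw [Matrix.mul_assoc, Matrix.nonsing_inv_mul _ hdet, Matrix.mul_one]
    rw [hN, hM, Matrix.add_mul, Matrix.mul_add, Matrix.mul_assoc _ P, hPS, Matrix.mul_smul, h,
      Matrix.smul_mul, Matrix.one_mul, hP]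
    simp only [Matrix.mul_assoc]
  have key : N⁻¹ * P = ΦS * M⁻¹ * ΦSᵀ := by
    have h : N * (ΦS * M⁻¹ * ΦSᵀ) = P := by
      rw [← Matrix.mul_assoc, ← Matrix.mul_assoc, hNS, Matrix.mul_assoc _ M,
        Matrix.mul_nonsing_inv _ hMu, Matrix.mul_one, hP]
    rw [← h, ← Matrix.mul_assoc, Matrix.nonsing_inv_mul _ hNu, Matrix.one_mul]
  rw [key, ← Matrix.mulVec_mulVec, ← Matrix.mulVec_mulVec, Matrix.dotProduct_mulVec φ ΦS,
    Matrix.mulVec_transpose]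
end

section
/- Let P be a symmetric n × n real matrix with P·P = P and both P and 1 − P positive semidefinite, let Λ be a symmetric positive semidefinite n × n real matrix, and let τ > 0. Then ‖(P·Λ·P + τ·1)⁻¹·(P·(Λ + τ·1)·P)‖₂ ≤ 2, where ‖·‖₂ denotes the ℓ2 operator norm. -/
/-!
With `A = PΛP + τ1`, idempotence of `P` gives `P(Λ + τ1)P = PΛP + τP = AP`, so the matrix in
question is exactly `P`. An orthogonal projection satisfies `‖P‖² = ‖P* P‖ = ‖P‖` by the C⋆-identity,
hence `‖P‖ ≤ 1`, which is stronger than the claimed bound `2`.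
-/

open Matrix

/-- The ℓ2 operator norm (largest singular value) of a square real matrix. -/
noncomputable def l2OpNorm {n : Type*} [Fintype n] [DecidableEq n]
    (M : Matrix n n ℝ) : ℝ :=
  ‖Matrix.toEuclideanCLM (𝕜 := ℝ) (n := n) M‖

/-- Step 2 of the estimator lemma: `‖(PΛP + τ1)⁻¹ (P(Λ+τ1)P)‖₂ ≤ 2`. -/
theorem compressed_resolvent_norm_bound
    {n : Type*} [Fintype n] [DecidableEq n]
    (P Λ : Matrix n n ℝ) (hPsymm : P.IsSymm) (hPidem : P * P = P)
    (hPpsd : P.PosSemidef) (hPres : ((1 : Matrix n n ℝ) - P).PosSemidef)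
    (hΛ : Λ.PosSemidef) (τ : ℝ) (hτ : 0 < τ) :
    l2OpNorm ((P * Λ * P + τ • (1 : Matrix n n ℝ))⁻¹
        * (P * (Λ + τ • (1 : Matrix n n ℝ)) * P)) ≤ 2 := by
  have hPH : Pᴴ = P := hPpsd.isHermitian.eq
  have hA : (P * Λ * P + τ • (1 : Matrix n n ℝ)).PosDef := by
    have h := hΛ.mul_mul_conjTranspose_same P
    rw [hPH] at h
    exact PosDef.posSemidef_add h (PosDef.one.smul hτ)
  have hfac : P * (Λ + τ • (1 : Matrix n n ℝ)) * P
      = (P * Λ * P + τ • (1 : Matrix n n ℝ)) * P := by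
    simp [mul_add, add_mul, mul_assoc, hPidem]
  rw [hfac, Matrix.nonsing_inv_mul_cancel_left _ _ ((isUnit_iff_isUnit_det _).1 hA.isUnit)]
  unfold l2OpNorm
  have h := CStarRing.norm_star_mul_self (x := Matrix.toEuclideanCLM (𝕜 := ℝ) (n := n) P)
  rw [← map_star, ← map_mul, star_eq_conjTranspose, hPH, hPidem] at h
  nlinarith
end

section
/- Let X be a finite nonempty set, f and μ real-valued functions on X, and Δ ≥ 0 a real number. Let X₀ ⊆ X be a nonempty subset, suppose x* ∈ X₀ satisfies f(x*) = max_{x ∈ X} f(x), and suppose |f(x) − μ(x)| ≤ Δ for all x ∈ X₀. Define X₁ := { x ∈ X₀ : μ(x) ≥ max_{x' ∈ X₀} μ(x') − 4Δ }. Then x* ∈ X₁, and for every z ∈ X₁ one has f(x*) − f(z) ≤ 6Δ. -/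
/-- Single-epoch elimination argument (Step 1 of the main theorem): if `μ`
approximates `f` to accuracy `Δ` on the active set `X₀` containing a global
maximizer `x*` of `f`, then `x*` survives the `4Δ`-threshold pruning and every
surviving action is `6Δ`-optimal. -/
theorem elimination_step
    {X : Type*} [Fintype X] [Nonempty X]
    (f μ : X → ℝ) (Δ : ℝ) (hΔ : 0 ≤ Δ)
    (X₀ : Finset X) (h₀ : X₀.Nonempty)
    (xstar : X) (hxmem : xstar ∈ X₀)
    (hxmax : f xstar = Finset.univ.sup' Finset.univ_nonempty f)
    (happrox : ∀ x ∈ X₀, |f x - μ x| ≤ Δ) :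
    xstar ∈ X₀.filter (fun x => X₀.sup' h₀ μ - 4 * Δ ≤ μ x) ∧
    ∀ z ∈ X₀.filter (fun x => X₀.sup' h₀ μ - 4 * Δ ≤ μ x),
      f xstar - f z ≤ 6 * Δ := by
  -- The `μ`-maximum exceeds `μ xstar` by at most `2 * Δ`, which is within the threshold.
  have hsup : X₀.sup' h₀ μ ≤ μ xstar + 2 * Δ := by
    refine Finset.sup'_le h₀ μ fun x hx => ?_
    have hfx : f x ≤ f xstar := hxmax ▸ Finset.le_sup' f (Finset.mem_univ x)
    have h1 := abs_le.mp (happrox x hx)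
    have h2 := abs_le.mp (happrox xstar hxmem)
    linarith [h1.1, h2.2]
  refine ⟨Finset.mem_filter.mpr ⟨hxmem, by linarith⟩, fun z hz => ?_⟩
  obtain ⟨hz₀, hzμ⟩ := Finset.mem_filter.mp hz
  -- `6 * Δ` is the threshold `4 * Δ` plus one approximation error at each of `xstar` and `z`.
  have hle : μ xstar ≤ X₀.sup' h₀ μ := Finset.le_sup' μ hxmem
  have h1 := abs_le.mp (happrox z hz₀)
  have h2 := abs_le.mp (happrox xstar hxmem)
  linarith [h1.1, h2.2]
end
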